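/- Let p > 2 and let G(x,t) = g(|x|,t) for x ∈ ℝ^n, t > 0. Then at every point (x,t) with x ≠ 0, t > 0 and 1 − ((p−2)/p^{p/(p−1)})·(|x|^{p/(p−1)} − 1)/t^{1/(p−1)} > 0, one has the explicit formulas ∂_t G(x,t) = p^{−p/(p−1)}·((|x|^{p/(p−1)} − 1)/t^{p/(p−1)})·G(x,t)^{1/(p−1)} and Δ_p G(x,t) = (p^{−p/(p−1)}·|x|^{p/(p−1)}/t^{p/(p−1)} − (n/(p t))·G(x,t)^{(p−2)/(p−1)})·G(x,t)^{1/(p−1)}. -/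

import Mathlib

open Real Filter Set

noncomputable def spatialGrad {n : ℕ} (u : EuclideanSpace ℝ (Fin n) → ℝ → ℝ)
    (x : EuclideanSpace ℝ (Fin n)) (t : ℝ) : EuclideanSpace ℝ (Fin n) :=
  gradient (fun y => u y t) x

noncomputable def pFlux (p : ℝ) {n : ℕ} (u : EuclideanSpace ℝ (Fin n) → ℝ → ℝ)
    (x : EuclideanSpace ℝ (Fin n)) (t : ℝ) : EuclideanSpace ℝ (Fin n) :=
  ‖spatialGrad u x t‖ ^ (p - 2) • spatialGrad u x t

/-- The `p`-Laplacian in space: the divergence (trace of the spatial Fréchet derivative)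
of the vector field `y ↦ |∇u(y,t)|^(p-2) ∇u(y,t)`. -/
noncomputable def pLaplacian (p : ℝ) {n : ℕ} (u : EuclideanSpace ℝ (Fin n) → ℝ → ℝ)
    (x : EuclideanSpace ℝ (Fin n)) (t : ℝ) : ℝ :=
  LinearMap.trace ℝ (EuclideanSpace ℝ (Fin n))
    (fderiv ℝ (fun y => pFlux p u y t) x).toLinearMap

/-- `u` satisfies the `p`-parabolic equation classically at `(x,t)`. -/
def IsClassicalPParabolicAt (p : ℝ) {n : ℕ} (u : EuclideanSpace ℝ (Fin n) → ℝ → ℝ)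
    (x : EuclideanSpace ℝ (Fin n)) (t : ℝ) : Prop :=
  DifferentiableAt ℝ (fun s => u x s) t ∧
  DifferentiableAt ℝ (fun y => u y t) x ∧
  DifferentiableAt ℝ (fun y => pFlux p u y t) x ∧
  deriv (fun s => u x s) t = pLaplacian p u x t

noncomputable def gbar (p r t : ℝ) : ℝ :=
  (max 0 (1 - (p - 2) / p ^ (p / (p - 1)) * ((r ^ (p / (p - 1)) - 1) / t ^ (1 / (p - 1)))))
    ^ ((p - 1) / (p - 2))

noncomputable def hbar (p ϱ : ℝ) {n : ℕ} (x : EuclideanSpace ℝ (Fin n)) (t : ℝ) : ℝ :=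
  gbar p ‖x‖ t - gbar p ϱ t

noncomputable def htilde (H T k : ℝ) {n : ℕ} (x : EuclideanSpace ℝ (Fin n)) (t : ℝ) : ℝ :=
  H * Real.exp 2 * (1 - Real.exp ((t - T) / T - (‖x‖ - 1) / k))

/-- The base of the power defining `gbar`. -/
noncomputable def Fb (p r t : ℝ) : ℝ :=
  1 - (p - 2) / p ^ (p / (p - 1)) * ((r ^ (p / (p - 1)) - 1) / t ^ (1 / (p - 1)))

lemma gbar_eq {p r t : ℝ} (h : 0 < Fb p r t) : gbar p r t = Fb p r t ^ ((p - 1) / (p - 2)) := by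
  unfold gbar
  rw [show max 0 (1 - (p - 2) / p ^ (p / (p - 1)) *
    ((r ^ (p / (p - 1)) - 1) / t ^ (1 / (p - 1)))) = Fb p r t from max_eq_right h.le]

lemma hasDerivAt_max_rpow {f : ℝ → ℝ} {f' a x : ℝ} (hf : HasDerivAt f f' x) (h : 0 < f x) :
    HasDerivAt (fun y => (max 0 (f y)) ^ a) (f' * a * f x ^ (a - 1)) x := by
  refine (hf.rpow_const (p := a) (Or.inl h.ne')).congr_of_eventuallyEq ?_
  filter_upwards [hf.continuousAt.eventually (lt_mem_nhds h)] with y hy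
  rw [max_eq_right hy.le]

lemma gbar_deriv_t {p r t : ℝ} (hp : 2 < p) (ht : 0 < t) (h : 0 < Fb p r t) :
    HasDerivAt (fun s => gbar p r s)
      (p ^ (-(p / (p - 1))) * ((r ^ (p / (p - 1)) - 1) / t ^ (p / (p - 1)))
        * Fb p r t ^ (1 / (p - 2))) t := by
  have hp0 : 0 < p := by linarith
  have h1 : p - 1 ≠ 0 := by linarith
  have h2 : p - 2 ≠ 0 := by linarith
  have hT : HasDerivAt (fun s : ℝ => s ^ (1 / (p - 1)))
      (1 / (p - 1) * t ^ (1 / (p - 1) - 1)) t :=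
    Real.hasDerivAt_rpow_const (Or.inl ht.ne')
  have hT0 : t ^ (1 / (p - 1)) ≠ 0 := (Real.rpow_pos_of_pos ht _).ne'
  have hF := (((hasDerivAt_const t (r ^ (p / (p - 1)) - 1)).fun_div hT hT0).const_mul
    ((p - 2) / p ^ (p / (p - 1)))).const_sub 1
  have hG := hasDerivAt_max_rpow (a := (p - 1) / (p - 2)) hF h
  refine hG.congr_deriv ?_
  change _ * _ * Fb p r t ^ _ = _
  rw [show (p - 1) / (p - 2) - 1 = 1 / (p - 2) by field_simp; ring]
  rw [Real.rpow_sub_one ht.ne', Real.rpow_neg hp0.le,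
    show t ^ (p / (p - 1)) = t ^ (1 / (p - 1)) * t by
      rw [← Real.rpow_add_one ht.ne']; congr 1; field_simp; ring]
  have hP : p ^ (p / (p - 1)) ≠ 0 := (Real.rpow_pos_of_pos hp0 _).ne'
  generalize t ^ (1 / (p - 1)) = T at *
  generalize p ^ (p / (p - 1)) = P at *
  generalize r ^ (p / (p - 1)) = R at *
  generalize Fb p r t ^ (1 / (p - 2)) = E at *
  field_simp
  ring

lemma gbar_deriv_r {p r t : ℝ} (hp : 2 < p) (hr : 0 < r) (ht : 0 < t) (h : 0 < Fb p r t) :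
    HasDerivAt (fun s => gbar p s t)
      (-(p * p ^ (-(p / (p - 1))) * r ^ (1 / (p - 1)) / t ^ (1 / (p - 1))
        * Fb p r t ^ (1 / (p - 2)))) r := by
  have hp0 : 0 < p := by linarith
  have h1 : p - 1 ≠ 0 := by linarith
  have h2 : p - 2 ≠ 0 := by linarith
  have hR : HasDerivAt (fun s : ℝ => s ^ (p / (p - 1)))
      (p / (p - 1) * r ^ (p / (p - 1) - 1)) r :=
    Real.hasDerivAt_rpow_const (Or.inl hr.ne')
  have hT0 : t ^ (1 / (p - 1)) ≠ 0 := (Real.rpow_pos_of_pos ht _).ne'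
  have hF := (((hR.sub_const 1).div_const (t ^ (1 / (p - 1)))).const_mul
    ((p - 2) / p ^ (p / (p - 1)))).const_sub 1
  have hG := hasDerivAt_max_rpow (a := (p - 1) / (p - 2)) hF h
  refine hG.congr_deriv ?_
  change _ * _ * Fb p r t ^ _ = _
  rw [show (p - 1) / (p - 2) - 1 = 1 / (p - 2) by field_simp; ring,
    show p / (p - 1) - 1 = 1 / (p - 1) by field_simp; ring]
  rw [Real.rpow_neg hp0.le]
  have hP : p ^ (p / (p - 1)) ≠ 0 := (Real.rpow_pos_of_pos hp0 _).ne'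
  generalize t ^ (1 / (p - 1)) = T at *
  generalize p ^ (p / (p - 1)) = P at *
  generalize r ^ (1 / (p - 1)) = R at *
  generalize Fb p r t ^ (1 / (p - 2)) = E at *
  field_simp

lemma hasFDerivAt_norm_aux {n : ℕ} {x : EuclideanSpace ℝ (Fin n)} (hx : x ≠ 0) :
    HasFDerivAt (fun y : EuclideanSpace ℝ (Fin n) => ‖y‖) (‖x‖⁻¹ • innerSL ℝ x) x := by
  have hn : ‖x‖ ≠ 0 := norm_ne_zero_iff.mpr hx
  have h := (hasStrictFDerivAt_norm_sq x).hasFDerivAt.sqrt (pow_ne_zero 2 hn)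
  simp only [Real.sqrt_sq (norm_nonneg _)] at h
  refine h.congr_fderiv ?_
  ext y
  simp
  field_simp

lemma gbar_hasGradientAt {n : ℕ} {p t : ℝ} {x : EuclideanSpace ℝ (Fin n)} (hp : 2 < p)
    (hx : x ≠ 0) (ht : 0 < t) (h : 0 < Fb p ‖x‖ t) :
    HasGradientAt (fun y : EuclideanSpace ℝ (Fin n) => gbar p ‖y‖ t)
      ((-(p * p ^ (-(p / (p - 1))) * ‖x‖ ^ (1 / (p - 1)) / t ^ (1 / (p - 1))
        * Fb p ‖x‖ t ^ (1 / (p - 2))) * ‖x‖⁻¹) • x) x := by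
  rw [hasGradientAt_iff_hasFDerivAt]
  have h := (gbar_deriv_r hp (norm_pos_iff.mpr hx) ht h).comp_hasFDerivAt x
    (hasFDerivAt_norm_aux hx)
  refine h.congr_fderiv ?_
  ext y
  simp [mul_assoc]

lemma pFlux_eq {n : ℕ} {p t : ℝ} {x : EuclideanSpace ℝ (Fin n)} (hp : 2 < p)
    (hx : x ≠ 0) (ht : 0 < t) (h : 0 < Fb p ‖x‖ t) :
    pFlux p (fun y s => gbar p ‖y‖ s) x t = (-(1 / (p * t)) * gbar p ‖x‖ t) • x := by
  have hp0 : 0 < p := by linarith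
  have h1 : p - 1 ≠ 0 := by linarith
  have h2 : p - 2 ≠ 0 := by linarith
  have hr : 0 < ‖x‖ := norm_pos_iff.mpr hx
  unfold pFlux spatialGrad
  rw [(gbar_hasGradientAt hp hx ht h).gradient, gbar_eq h, norm_smul, smul_smul]
  congr 1
  set D := p * p ^ (-(p / (p - 1))) * ‖x‖ ^ (1 / (p - 1)) / t ^ (1 / (p - 1))
        * Fb p ‖x‖ t ^ (1 / (p - 2)) with hD
  have hD0 : 0 < D := by positivity
  have e1 : ‖-D * ‖x‖⁻¹‖ * ‖x‖ = D := by
    rw [norm_mul, norm_neg, norm_inv, norm_norm, Real.norm_of_nonneg hD0.le]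
    field_simp
  have e2 : D ^ (p - 2) * D = 1 / (p * t) * Fb p ‖x‖ t ^ ((p - 1) / (p - 2)) * ‖x‖ := by
    rw [← Real.rpow_add_one hD0.ne', show p - 2 + 1 = p - 1 by ring, hD]
    have e3 : p * p ^ (-(p / (p - 1))) = p ^ (-(1 / (p - 1))) := by
      rw [mul_comm, ← Real.rpow_add_one hp0.ne']
      congr 1; field_simp; ring
    rw [e3, Real.mul_rpow (by positivity) (by positivity),
      Real.div_rpow (by positivity) (by positivity),
      Real.mul_rpow (by positivity) (by positivity), ← Real.rpow_mul hp0.le,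
      ← Real.rpow_mul hr.le, ← Real.rpow_mul ht.le, ← Real.rpow_mul h.le,
      show -(1 / (p - 1)) * (p - 1) = -1 by field_simp,
      show 1 / (p - 1) * (p - 1) = 1 by field_simp,
      show 1 / (p - 2) * (p - 1) = (p - 1) / (p - 2) by field_simp,
      Real.rpow_neg_one, Real.rpow_one, Real.rpow_one]
    field_simp
  rw [e1]
  calc D ^ (p - 2) * (-D * ‖x‖⁻¹) = -(D ^ (p - 2) * D) * ‖x‖⁻¹ := by ring
    _ = _ := by rw [e2]; field_simp

lemma pLap_eq {n : ℕ} {p t : ℝ} {x : EuclideanSpace ℝ (Fin n)} (hp : 2 < p)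
    (hx : x ≠ 0) (ht : 0 < t) (h : 0 < Fb p ‖x‖ t) :
    pLaplacian p (fun y s => gbar p ‖y‖ s) x t =
      -(1 / (p * t)) * gbar p ‖x‖ t * n + -(1 / (p * t)) *
      (-(p * p ^ (-(p / (p - 1))) * ‖x‖ ^ (1 / (p - 1)) / t ^ (1 / (p - 1))
        * Fb p ‖x‖ t ^ (1 / (p - 2))) * ‖x‖) := by
  have hp0 : 0 < p := by linarith
  have hr : 0 < ‖x‖ := norm_pos_iff.mpr hx
  have hc : ContinuousAt (fun y : EuclideanSpace ℝ (Fin n) => Fb p ‖y‖ t) x := by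
    unfold Fb
    have : ContinuousAt (fun y : EuclideanSpace ℝ (Fin n) => ‖y‖ ^ (p / (p - 1))) x :=
      continuous_norm.continuousAt.rpow_const (Or.inl hr.ne')
    fun_prop
  have hev : (fun y => pFlux p (fun y s => gbar p ‖y‖ s) y t) =ᶠ[nhds x]
      fun y => (-(1 / (p * t)) * gbar p ‖y‖ t) • y := by
    filter_upwards [hc.eventually (lt_mem_nhds h), isOpen_ne.mem_nhds hx] with y hy hy0
    exact pFlux_eq hp hy0 ht hy
  have hd := ((gbar_hasGradientAt hp hx ht h).hasFDerivAt.const_mul (-(1 / (p * t)))).fun_smul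
    (hasFDerivAt_id x)
  simp only [id] at hd
  unfold pLaplacian
  rw [hev.fderiv_eq, hd.fderiv]
  rw [ContinuousLinearMap.toLinearMap_add, ContinuousLinearMap.toLinearMap_smul, map_add, map_smul]
  congr 1
  · simp
  · erw [LinearMap.trace_smulRight]
    simp
    field_simp
    simp

/-- explicit formulas for `∂ₜG` and `Δ_p G` for `G(x,t) = g(|x|,t)`. -/
theorem stmt7 (p : ℝ) (hp : 2 < p) (n : ℕ) (x : EuclideanSpace ℝ (Fin n)) (t : ℝ)
    (hx : x ≠ 0) (ht : 0 < t)
    (hpos : 0 < 1 - (p - 2) / p ^ (p / (p - 1)) * ((‖x‖ ^ (p / (p - 1)) - 1) / t ^ (1 / (p - 1)))) :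
    deriv (fun s => gbar p ‖x‖ s) t
        = p ^ (-(p / (p - 1))) * ((‖x‖ ^ (p / (p - 1)) - 1) / t ^ (p / (p - 1)))
            * gbar p ‖x‖ t ^ ((1:ℝ) / (p - 1)) ∧
    pLaplacian p (fun y s => gbar p ‖y‖ s) x t
        = (p ^ (-(p / (p - 1))) * ‖x‖ ^ (p / (p - 1)) / t ^ (p / (p - 1))
            - (n : ℝ) / (p * t) * gbar p ‖x‖ t ^ ((p - 2) / (p - 1)))
            * gbar p ‖x‖ t ^ ((1:ℝ) / (p - 1)) := by
  have h : 0 < Fb p ‖x‖ t := hpos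
  have hp0 : 0 < p := by linarith
  have h1 : p - 1 ≠ 0 := by linarith
  have h2 : p - 2 ≠ 0 := by linarith
  have hr : 0 < ‖x‖ := norm_pos_iff.mpr hx
  have hG : gbar p ‖x‖ t ^ ((1:ℝ) / (p - 1)) = Fb p ‖x‖ t ^ (1 / (p - 2)) := by
    rw [gbar_eq h, ← Real.rpow_mul h.le]
    congr 1; field_simp
  have hG2 : gbar p ‖x‖ t ^ ((p - 2) / (p - 1)) = Fb p ‖x‖ t := by
    rw [gbar_eq h, ← Real.rpow_mul h.le,
      show (p - 1) / (p - 2) * ((p - 2) / (p - 1)) = 1 by field_simp, Real.rpow_one]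
  have hG3 : gbar p ‖x‖ t = Fb p ‖x‖ t * Fb p ‖x‖ t ^ (1 / (p - 2)) := by
    rw [gbar_eq h, mul_comm, ← Real.rpow_add_one h.ne']
    congr 1; field_simp; ring
  refine ⟨?_, ?_⟩
  · rw [(gbar_deriv_t hp ht h).deriv, hG]
  · rw [pLap_eq hp hx ht h, hG, hG2, hG3]
    have e (a : ℝ) (ha : 0 < a) : a ^ (p / (p - 1)) = a ^ (1 / (p - 1)) * a := by
      rw [← Real.rpow_add_one ha.ne']; congr 1; field_simp; ring
    rw [e t ht, e _ hr]
    have hT0 : t ^ (1 / (p - 1)) ≠ 0 := (Real.rpow_pos_of_pos ht _).ne'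
    field_simp
    ring
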